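/- arXiv:2401.11680 — 2 statements merged into one kernel-verified Lean document; each statement's English description precedes it below -/
import Mathlib

section
/- For any preference order σ ∈ {±1}^n, the maximal number of napkinless diners satisfies 0 ≤ ν_max(σ) ≤ ⌊n/3⌋. -/
namespace Napkin

variable {n q : ℕ}

/-- The napkin to the left of seat `s`; napkin `s` itself is the one to the right of
seat `s`, placed between seats `s` and `s + 1` around the circular table. -/
def leftNapkin (s : Fin n) : Fin n := ⟨((s : ℕ) + (n - 1)) % n, Nat.mod_lt _ s.pos⟩

/-- Process the diners `0, 1, …, n-1` in their arrival order.  Here `w i = j` means that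
diner `j` sits in seat `i` (so diner `j` sits in seat `w.symm j`), and `σ j = true`
means diner `j` prefers the napkin to their right.  Each diner takes their preferred
adjacent napkin if it is unclaimed, otherwise the other adjacent napkin if it is
unclaimed, and otherwise is napkinless.  The returned state consists of the set of
claimed napkins and the set of napkinless diners. -/
def dine (σ : Fin n → Bool) (w : Equiv.Perm (Fin n)) :
    Finset (Fin n) × Finset (Fin n) :=
  (List.finRange n).foldl
    (fun st j =>
      let s := w.symm j
      let pref := if σ j then s else leftNapkin s
      let other := if σ j then leftNapkin s else s
      if pref ∉ st.1 then (insert pref st.1, st.2)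
      else if other ∉ st.1 then (insert other st.1, st.2)
      else (st.1, insert j st.2))
    (∅, ∅)

/-- The set of napkinless diners for the seating arrangement `(w, σ)`. -/
def napkinless (σ : Fin n → Bool) (w : Equiv.Perm (Fin n)) : Finset (Fin n) :=
  (dine σ w).2

/-- `ν(w,σ)`, the number of napkinless diners. -/
def nu (σ : Fin n → Bool) (w : Equiv.Perm (Fin n)) : ℕ := (napkinless σ w).card

/-- A seating order puts diner `1` in seat `1` (index `0` here). -/
def IsSeating (w : Equiv.Perm (Fin n)) : Prop :=
  ∀ i : Fin n, (i : ℕ) = 0 → (w i : ℕ) = 0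

instance : DecidablePred (IsSeating (n := n)) := fun w =>
  decidable_of_iff (∀ i : Fin n, (i : ℕ) = 0 → (w i : ℕ) = 0) Iff.rfl

/-- `ν_max(σ)`, the maximal number of napkinless diners over all seating orders. -/
def nuMax (σ : Fin n → Bool) : ℕ :=
  (Finset.univ.filter fun w : Equiv.Perm (Fin n) => IsSeating w).sup (nu σ)

/-- The value `±1` of a napkin preference. -/
def sign (b : Bool) : ℤ := if b then 1 else -1

/-- The drift `h(σ) = max(0, max over prefixes of σ₁ + ⋯ + σᵢ)`. -/
def drift (σ : Fin n → Bool) : ℕ :=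
  (Finset.range (n + 1)).sup fun i =>
    (∑ j ∈ Finset.univ.filter (fun j : Fin n => (j : ℕ) < i), sign (σ j)).toNat

/-- A bench collection: `q` pairwise disjoint triples `aᵢ < bᵢ < cᵢ` in `{1,…,n}`. -/
structure BenchCollection (n q : ℕ) where
  a : Fin q → Fin n
  b : Fin q → Fin n
  c : Fin q → Fin n
  hab : ∀ i, a i < b i
  hbc : ∀ i, b i < c i
  disj : ∀ i j : Fin q, i ≠ j →
    Disjoint ({a i, b i, c i} : Finset (Fin n)) ({a j, b j, c j} : Finset (Fin n))

/-- A bench is balanced when its two smallest members have opposite preferences. -/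
def Balanced (σ : Fin n → Bool) (β : BenchCollection n q) (i : Fin q) : Prop :=
  sign (σ (β.a i)) + sign (σ (β.b i)) = 0

instance (σ : Fin n → Bool) (β : BenchCollection n q) :
    DecidablePred (Balanced σ β) := fun i =>
  decidable_of_iff (sign (σ (β.a i)) + sign (σ (β.b i)) = 0) Iff.rfl

/-- `b(β,σ)`, the number of balanced benches of `β`. -/
def balance (σ : Fin n → Bool) (β : BenchCollection n q) : ℕ :=
  (Finset.univ.filter fun i => Balanced σ β i).card

/-!
Record, for each diner who gets a napkin, whether it is the one to their right or the one to their
left. When a diner `d` is left without a napkin, the napkin to the right of `d` is gone; since `d`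
did not take it, somebody else took it as their *left* napkin. As distinct diners have distinct
right napkins, there are at least as many left-takers as napkinless diners, and symmetrically for
right-takers. These three groups are disjoint, so the napkinless make up at most a third of the
table.
-/

section Serving

variable {α β : Type*} [DecidableEq α] [DecidableEq β]
  {right left : α → β} {A R L : Finset α} {st : Finset β × Finset α} {j : α}

/-- One step of `dine`, for diners `α` and napkins `β` with arbitrary adjacency maps `right` and
`left`: diner `j` arrives when the claimed napkins are `st.1` and the napkinless diners `st.2`. -/
def serve (right left : α → β) (σ : α → Bool) (st : Finset β × Finset α) (j : α) :
    Finset β × Finset α :=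
  let pref := if σ j then right j else left j
  let other := if σ j then left j else right j
  if pref ∉ st.1 then (insert pref st.1, st.2)
  else if other ∉ st.1 then (insert other st.1, st.2)
  else (st.1, insert j st.2)

theorem serve_cases (right left : α → β) (σ : α → Bool) (st : Finset β × Finset α) (j : α) :
    serve right left σ st j = (insert (right j) st.1, st.2) ∨
    serve right left σ st j = (insert (left j) st.1, st.2) ∨
    serve right left σ st j = (st.1, insert j st.2) ∧ right j ∈ st.1 ∧ left j ∈ st.1 := by
  cases hσ : σ j <;> by_cases hr : right j ∈ st.1 <;> by_cases hl : left j ∈ st.1 <;>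
    simp [serve, hσ, hr, hl]

/-- `IsLedger right left A st R L` says that the state `st` (claimed napkins, napkinless diners) is
explained by the diners `R` having taken their right napkin and the diners `L` their left one, all
diners involved being among the arrived ones `A`. -/
structure IsLedger (right left : α → β) (A : Finset α) (st : Finset β × Finset α)
    (R L : Finset α) : Prop where
  disjoint_right_left : Disjoint R L
  disjoint_right_napkinless : Disjoint R st.2
  disjoint_left_napkinless : Disjoint L st.2
  subset_arrived : R ∪ L ∪ st.2 ⊆ A
  claimed_eq : st.1 = R.image right ∪ L.image left
  image_right_napkinless : st.2.image right ⊆ st.1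
  image_left_napkinless : st.2.image left ⊆ st.1

namespace IsLedger

theorem empty (right left : α → β) : IsLedger right left ∅ (∅, ∅) ∅ ∅ := by
  constructor <;> simp

theorem swap (h : IsLedger right left A st R L) : IsLedger left right A st L R where
  disjoint_right_left := h.disjoint_right_left.symm
  disjoint_right_napkinless := h.disjoint_left_napkinless
  disjoint_left_napkinless := h.disjoint_right_napkinless
  subset_arrived := by simpa only [Finset.union_comm L R] using h.subset_arrived
  claimed_eq := by rw [h.claimed_eq, Finset.union_comm]
  image_right_napkinless := h.image_left_napkinless
  image_left_napkinless := h.image_right_napkinless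

theorem notMem_of_notMem_arrived (h : IsLedger right left A st R L) (hj : j ∉ A) :
    j ∉ R ∧ j ∉ L ∧ j ∉ st.2 := by
  have hj' : j ∉ R ∪ L ∪ st.2 := fun hmem => hj (h.subset_arrived hmem)
  simpa only [Finset.mem_union, not_or, and_assoc] using hj'

theorem insert_right (h : IsLedger right left A st R L) (hj : j ∉ A) :
    IsLedger right left (insert j A) (insert (right j) st.1, st.2) (insert j R) L := by
  obtain ⟨-, hjL, hjM⟩ := h.notMem_of_notMem_arrived hj
  exact {
    disjoint_right_left := Finset.disjoint_insert_left.2 ⟨hjL, h.disjoint_right_left⟩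
    disjoint_right_napkinless := Finset.disjoint_insert_left.2 ⟨hjM, h.disjoint_right_napkinless⟩
    disjoint_left_napkinless := h.disjoint_left_napkinless
    subset_arrived := by
      simpa only [Finset.insert_union] using Finset.insert_subset_insert j h.subset_arrived
    claimed_eq := by rw [h.claimed_eq, Finset.image_insert, Finset.insert_union]
    image_right_napkinless := h.image_right_napkinless.trans (Finset.subset_insert _ _)
    image_left_napkinless := h.image_left_napkinless.trans (Finset.subset_insert _ _) }

theorem insert_left (h : IsLedger right left A st R L) (hj : j ∉ A) :
    IsLedger right left (insert j A) (insert (left j) st.1, st.2) R (insert j L) :=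
  (h.swap.insert_right hj).swap

theorem insert_napkinless (h : IsLedger right left A st R L) (hj : j ∉ A)
    (hr : right j ∈ st.1) (hl : left j ∈ st.1) :
    IsLedger right left (insert j A) (st.1, insert j st.2) R L := by
  obtain ⟨hjR, hjL, -⟩ := h.notMem_of_notMem_arrived hj
  exact {
    disjoint_right_left := h.disjoint_right_left
    disjoint_right_napkinless := Finset.disjoint_insert_right.2 ⟨hjR, h.disjoint_right_napkinless⟩
    disjoint_left_napkinless := Finset.disjoint_insert_right.2 ⟨hjL, h.disjoint_left_napkinless⟩
    subset_arrived := by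
      simpa only [Finset.union_insert] using Finset.insert_subset_insert j h.subset_arrived
    claimed_eq := h.claimed_eq
    image_right_napkinless := by
      simpa only [Finset.image_insert] using Finset.insert_subset hr h.image_right_napkinless
    image_left_napkinless := by
      simpa only [Finset.image_insert] using Finset.insert_subset hl h.image_left_napkinless }

theorem exists_serve (h : IsLedger right left A st R L) (σ : α → Bool) (hj : j ∉ A) :
    ∃ R' L', IsLedger right left (insert j A) (serve right left σ st j) R' L' := by
  rcases serve_cases right left σ st j with hs | hs | ⟨hs, hr, hl⟩ <;> rw [hs]
  · exact ⟨_, _, h.insert_right hj⟩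
  · exact ⟨_, _, h.insert_left hj⟩
  · exact ⟨_, _, h.insert_napkinless hj hr hl⟩

theorem exists_foldl_serve (right left : α → β) (σ : α → Bool) {l : List α} (hl : l.Nodup) :
    ∃ R L, IsLedger right left l.toFinset (l.foldl (serve right left σ) (∅, ∅)) R L := by
  induction l using List.reverseRecOn with
  | nil => exact ⟨∅, ∅, empty right left⟩
  | append_singleton l j ih =>
    obtain ⟨hj, hl⟩ : j ∉ l ∧ l.Nodup := by
      rwa [← List.concat_eq_append, List.nodup_concat] at hl
    obtain ⟨R, L, h⟩ := ih hl
    have hA : (l ++ [j]).toFinset = insert j l.toFinset := by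
      rw [List.toFinset_append, List.toFinset_cons, List.toFinset_nil, Finset.union_insert,
        Finset.union_empty]
    rw [hA, List.foldl_concat]
    exact h.exists_serve σ (List.mem_toFinset.not.2 hj)

theorem card_napkinless_le_left (h : IsLedger right left A st R L)
    (hright : Function.Injective right) : st.2.card ≤ L.card := by
  have hdisj : Disjoint (st.2.image right) (R.image right) :=
    (Finset.disjoint_image hright).2 h.disjoint_right_napkinless.symm
  have hsub : st.2.image right ⊆ L.image left :=
    Disjoint.left_le_of_le_sup_left (h.image_right_napkinless.trans h.claimed_eq.subset) hdisj
  calc st.2.card = (st.2.image right).card := (Finset.card_image_of_injective _ hright).symm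
    _ ≤ (L.image left).card := Finset.card_le_card hsub
    _ ≤ L.card := Finset.card_image_le

theorem three_mul_card_napkinless_le (h : IsLedger right left A st R L)
    (hright : Function.Injective right) (hleft : Function.Injective left) :
    3 * st.2.card ≤ A.card := by
  have hL : st.2.card ≤ L.card := h.card_napkinless_le_left hright
  have hR : st.2.card ≤ R.card := h.swap.card_napkinless_le_left hleft
  have hdisj : Disjoint (R ∪ L) st.2 :=
    Finset.disjoint_union_left.2 ⟨h.disjoint_right_napkinless, h.disjoint_left_napkinless⟩
  calc 3 * st.2.card ≤ R.card + L.card + st.2.card := by omega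
    _ = (R ∪ L ∪ st.2).card := by
      rw [Finset.card_union_of_disjoint hdisj, Finset.card_union_of_disjoint h.disjoint_right_left]
    _ ≤ A.card := Finset.card_le_card h.subset_arrived

end IsLedger

theorem three_mul_card_foldl_serve_le (hright : Function.Injective right)
    (hleft : Function.Injective left) (σ : α → Bool) {l : List α} (hl : l.Nodup) :
    3 * (l.foldl (serve right left σ) (∅, ∅)).2.card ≤ l.length := by
  obtain ⟨R, L, h⟩ := IsLedger.exists_foldl_serve right left σ hl
  exact (h.three_mul_card_napkinless_le hright hleft).trans l.toFinset_card_le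

end Serving

theorem leftNapkin_injective : Function.Injective (leftNapkin (n := n)) := by
  intro s t h
  have hmod : (s : ℕ) ≡ t [MOD n] := Nat.ModEq.add_right_cancel' (n - 1) (congrArg Fin.val h)
  exact Fin.ext (hmod.eq_of_lt_of_lt s.isLt t.isLt)

theorem dine_eq_foldl_serve (σ : Fin n → Bool) (w : Equiv.Perm (Fin n)) :
    dine σ w =
      (List.finRange n).foldl (serve w.symm (fun j => leftNapkin (w.symm j)) σ) (∅, ∅) :=
  rfl

theorem three_mul_nu_le (σ : Fin n → Bool) (w : Equiv.Perm (Fin n)) : 3 * nu σ w ≤ n := by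
  rw [nu, napkinless, dine_eq_foldl_serve]
  have h := three_mul_card_foldl_serve_le w.symm.injective
    (leftNapkin_injective.comp w.symm.injective) σ (List.nodup_finRange n)
  rwa [List.length_finRange] at h

/-- For any preference order `σ`, `0 ≤ ν_max(σ) ≤ ⌊n/3⌋`. -/
theorem statement1 (n : ℕ) (hn : 1 ≤ n) (σ : Fin n → Bool) :
    0 ≤ nuMax σ ∧ nuMax σ ≤ n / 3 := by
  refine ⟨Nat.zero_le _, Finset.sup_le fun w _ => ?_⟩
  rw [Nat.le_div_iff_mul_le three_pos, mul_comm]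
  exact three_mul_nu_le σ w

end Napkin
end

section
/- For all integers n ≥ h ≥ 0, the number of sequences σ ∈ {±1}^n with drift h(σ) = h equals the binomial coefficient C(n, ⌊(n−h)/2⌋). Equivalently, the number of lattice paths of length n with steps N and E, starting at (0,0), whose drift equals h is C(n, ⌊(n−h)/2⌋). -/
/-!
Prepending a letter `±1` to a path shifts all its partial sums, so the drift `d` becomes
`max 0 (d ± 1)`. The number `N n h` of words of length `n` and drift `h` therefore satisfies
`N (n + 1) (h + 1) = N n h + N n (h + 2)` and, because both `d = 0` and `d = 1` fall to `0`,
`N (n + 1) 0 = N n 0 + N n 1`. Written as `C(n, ⌈(n + h) / 2⌉)`, which also vanishes for `h > n`,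
the count turns the first recurrence into Pascal's rule; the second is Pascal's rule combined with
the symmetry `C(n, ⌈n / 2⌉) = C(n, ⌊n / 2⌋)`.
-/

namespace Napkin

variable {n q : ℕ}

section

open Finset

theorem card_filter_fin_cons {α : Type*} [Fintype α] (p : (Fin (n + 1) → α) → Prop)
    [DecidablePred p] :
    #{σ | p σ} = ∑ a, #{σ : Fin n → α | p (Fin.cons a σ)} := by
  simp only [card_filter]
  rw [← (Fin.consEquiv fun _ => α).sum_comp, Fintype.sum_prod_type]
  rfl

theorem natCast_drift_le_iff (σ : Fin n → Bool) (k : ℤ) :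
    (drift σ : ℤ) ≤ k ↔ ∀ i, Fin.partialSum (fun j => sign (σ j)) i ≤ k := by
  obtain hk | hk := lt_or_ge k 0
  · have hzero : ¬ ∀ i, Fin.partialSum (fun j => sign (σ j)) i ≤ k := fun h =>
      hk.not_ge (Fin.partialSum_zero (fun j => sign (σ j)) ▸ h 0)
    exact iff_of_false (by lia) hzero
  · lift k to ℕ using hk
    simp only [drift, Nat.cast_le, Finset.sup_le_iff, mem_range, Int.toNat_le, Fin.partialSum,
      List.sum_take_ofFn, Fin.forall_iff]

theorem drift_cons (b : Bool) (σ : Fin n → Bool) :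
    drift (Fin.cons b σ : Fin (n + 1) → Bool) = (sign b + drift σ).toNat := by
  refine eq_of_forall_ge_iff fun k => ?_
  calc drift (Fin.cons b σ : Fin (n + 1) → Bool) ≤ k
      ↔ ∀ i, sign b + Fin.partialSum (fun j => sign (σ j)) i ≤ k := by
        -- The empty prefix only demands `0 ≤ k`, which is automatic.
        rw [← Int.ofNat_le, natCast_drift_le_iff, Fin.forall_fin_succ]
        simp [Fin.partialSum_succ', Fin.tail_def]
    _ ↔ ∀ i, Fin.partialSum (fun j => sign (σ j)) i ≤ k - sign b := by
        simp only [le_sub_iff_add_le']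
    _ ↔ (sign b + drift σ).toNat ≤ k := by
        rw [← natCast_drift_le_iff, le_sub_iff_add_le', Int.toNat_le]

theorem drift_cons_true (σ : Fin n → Bool) :
    drift (Fin.cons true σ : Fin (n + 1) → Bool) = drift σ + 1 := by
  simp only [drift_cons, sign, if_true]
  lia

theorem drift_cons_false (σ : Fin n → Bool) :
    drift (Fin.cons false σ : Fin (n + 1) → Bool) = drift σ - 1 := by
  simp only [drift_cons, sign, Bool.false_eq_true, if_false]
  lia

theorem card_drift_eq_succ_zero (n : ℕ) :
    #{σ : Fin (n + 1) → Bool | drift σ = 0} =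
      #{σ : Fin n → Bool | drift σ = 0} + #{σ : Fin n → Bool | drift σ = 1} := by
  have hdisj : Disjoint (univ.filter fun σ : Fin n → Bool => drift σ = 0)
      (univ.filter fun σ => drift σ = 1) :=
    disjoint_filter.2 fun σ _ h₀ h₁ => by lia
  rw [card_filter_fin_cons, ← card_union_of_disjoint hdisj, ← filter_or]
  simp [drift_cons_true, drift_cons_false, Nat.sub_eq_zero_iff_le, Nat.le_one_iff_eq_zero_or_eq_one]

theorem card_drift_eq_succ_succ (n h : ℕ) :
    #{σ : Fin (n + 1) → Bool | drift σ = h + 1} =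
      #{σ : Fin n → Bool | drift σ = h} + #{σ : Fin n → Bool | drift σ = h + 2} := by
  rw [card_filter_fin_cons]
  simp [drift_cons_true, drift_cons_false]

theorem choose_succ_div_two (n : ℕ) : n.choose ((n + 1) / 2) = n.choose (n / 2) :=
  Nat.choose_symm_of_eq_add (by lia)

theorem card_drift_eq (n h : ℕ) :
    #{σ : Fin n → Bool | drift σ = h} = n.choose ((n + h + 1) / 2) := by
  induction n generalizing h with
  | zero => cases h <;> simp [drift, Nat.choose_eq_zero_of_lt]
  | succ n ih =>
    cases h with
    | zero =>
      calc #{σ : Fin (n + 1) → Bool | drift σ = 0}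
          = n.choose ((n + 1) / 2) + n.choose ((n + 1 + 1) / 2) := by
            rw [card_drift_eq_succ_zero, ih, ih, add_zero]
        _ = n.choose (n / 2) + n.choose (n / 2 + 1) := by
            rw [choose_succ_div_two, show (n + 1 + 1) / 2 = n / 2 + 1 by lia]
        _ = (n + 1).choose ((n + 1 + 0 + 1) / 2) := by
            rw [← Nat.choose_succ_succ', show (n + 1 + 0 + 1) / 2 = n / 2 + 1 by lia]
    | succ h =>
      calc #{σ : Fin (n + 1) → Bool | drift σ = h + 1}
          = n.choose ((n + h + 1) / 2) + n.choose ((n + (h + 2) + 1) / 2) := by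
            rw [card_drift_eq_succ_succ, ih, ih]
        _ = n.choose ((n + h + 1) / 2) + n.choose ((n + h + 1) / 2 + 1) := by
            rw [show (n + (h + 2) + 1) / 2 = (n + h + 1) / 2 + 1 by lia]
        _ = (n + 1).choose ((n + 1 + (h + 1) + 1) / 2) := by
            rw [← Nat.choose_succ_succ',
              show (n + 1 + (h + 1) + 1) / 2 = (n + h + 1) / 2 + 1 by lia]

end

/-- For `n ≥ h ≥ 0`, the number of sequences `σ ∈ {±1}ⁿ` (equivalently,
`{N,E}` lattice paths of length `n` from the origin) with drift exactly `h` is the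
binomial coefficient `C(n, ⌊(n-h)/2⌋)`. -/
theorem statement10 (n h : ℕ) (hh : h ≤ n) :
    ((Finset.univ : Finset (Fin n → Bool)).filter fun σ => drift σ = h).card
      = n.choose ((n - h) / 2) := by
  rw [card_drift_eq]
  exact Nat.choose_symm_of_eq_add (by lia)

end Napkin
end
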